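/- arXiv:1002.2725 — 4 statements merged into one kernel-verified Lean document; each statement's English description precedes it below -/
import Mathlib

section
/- For every σ ∈ ℓ²(ℤ,ℂ) and every m ∈ ℤ with |m| ≥ 2, writing ∏_{j∈ℤ, j≠m}(1 + σ_j/(j − m)) = 1 + r_m(σ), one has |r_m(σ)| ≤ 2·(‖σ‖/(|m| − 1)^{1/2} + ‖T_m(σ)‖)·exp(2‖σ‖), where ‖T_m(σ)‖ := (∑_{j∈ℤ, |j| ≥ |m|/2} |σ_j|²)^{1/2} is the ℓ²-norm of the tail (σ_j)_{|j| ≥ |m|/2}, i.e. the sum is over all j ∈ ℤ with 2|j| ≥ |m|. -/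
lemma aux_w (m : ℤ) (u : Finset ℤ) : ∑ j ∈ u, (|((j - m : ℤ) : ℝ)|⁻¹) ^ 2 ≤ 4 := by
  have h0 : HasSum (fun n : ℕ => (1 : ℝ) / ((n + 1 : ℕ) : ℝ) ^ 2) (Real.pi ^ 2 / 6) := by
    have := (hasSum_nat_add_iff' (f := fun n : ℕ => (1 : ℝ) / (n : ℝ) ^ 2) 1).2 hasSum_zeta_two
    simpa using this
  have h1 : HasSum (fun k : ℤ => (|(k : ℝ)|⁻¹) ^ 2)
      (Real.pi ^ 2 / 6 + (|((0 : ℤ) : ℝ)|⁻¹) ^ 2 + Real.pi ^ 2 / 6) := by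
    apply HasSum.of_add_one_of_neg_add_one (f := fun k : ℤ => (|(k : ℝ)|⁻¹) ^ 2)
    · convert h0 using 2 with n
      push_cast
      rw [inv_pow, sq_abs, one_div]
    · convert h0 using 2 with n
      push_cast
      rw [inv_pow, sq_abs, one_div]
      congr 1
      ring
  have h2 : HasSum (fun j : ℤ => (|((j - m : ℤ) : ℝ)|⁻¹) ^ 2) _ :=
    ((Equiv.subRight m).hasSum_iff (f := fun k : ℤ => (|(k : ℝ)|⁻¹) ^ 2)).2 h1
  refine (sum_le_hasSum u (fun _ _ => by positivity) h2).trans ?_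
  have := Real.pi_lt_d2
  have := Real.pi_pos
  simp only [Int.cast_zero, abs_zero, inv_zero]
  nlinarith

lemma aux_near (m : ℤ) (hm : 2 ≤ |m|) (u : Finset ℤ) (hu : ∀ j ∈ u, ¬ |m| ≤ 2 * |j|) :
    ∑ j ∈ u, (|((j - m : ℤ) : ℝ)|⁻¹) ^ 2 ≤ 4 / ((|m| : ℝ) - 1) := by
  have hM : (2 : ℝ) ≤ |(m : ℝ)| := by exact_mod_cast hm
  have hb : ∀ j ∈ u, (|((j - m : ℤ) : ℝ)|⁻¹) ^ 2 ≤ 4 / |(m : ℝ)| ^ 2 := by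
    intro j hj
    have h1 := hu j hj
    have h2 : |m| ≤ 2 * |j - m| := by
      have := abs_sub_abs_le_abs_sub m j
      rw [abs_sub_comm] at this
      omega
    have h3 : |(m : ℝ)| ≤ 2 * |((j - m : ℤ) : ℝ)| := by exact_mod_cast h2
    rw [inv_pow, inv_eq_one_div, div_le_div_iff₀ (by apply pow_pos; linarith)
      (by apply pow_pos; linarith)]
    nlinarith
  have hc : (u.card : ℝ) ≤ |(m : ℝ)| := by
    have hs : u ⊆ Finset.Icc (-((|m| - 1) / 2)) ((|m| - 1) / 2) := by
      intro j hj
      have h1 := hu j hj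
      have := le_abs_self j
      have := neg_abs_le j
      rw [Finset.mem_Icc]
      omega
    have h4 := Finset.card_le_card hs
    rw [Int.card_Icc] at h4
    have h5 : (u.card : ℤ) ≤ |m| := by omega
    exact_mod_cast h5
  calc _ ≤ ∑ j ∈ u, 4 / |(m : ℝ)| ^ 2 := Finset.sum_le_sum hb
    _ = u.card * (4 / |(m : ℝ)| ^ 2) := by rw [Finset.sum_const, nsmul_eq_mul]
    _ ≤ |(m : ℝ)| * (4 / |(m : ℝ)| ^ 2) := by gcongr
    _ = 4 / |(m : ℝ)| := by field_simp
    _ ≤ _ := by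
      apply div_le_div_of_nonneg_left <;> linarith

lemma aux_cs (σ : ℤ → ℂ) (u : Finset ℤ) (g : ℤ → ℝ) (A B : ℝ)
    (hA : ∑ j ∈ u, ‖σ j‖ ^ 2 ≤ A) (hB : ∑ j ∈ u, g j ^ 2 ≤ B) :
    ∑ j ∈ u, ‖σ j‖ * g j ≤ Real.sqrt A * Real.sqrt B :=
  (Real.sum_mul_le_sqrt_mul_sqrt u _ _).trans (by gcongr)


/-- For every `σ ∈ ℓ²(ℤ,ℂ)` and every `m ∈ ℤ` with `|m| ≥ 2`, writing
`∏_{j ≠ m} (1 + σ j / (j - m)) = 1 + r_m(σ)`, one has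
`|r_m(σ)| ≤ 2 (‖σ‖/(|m|-1)^{1/2} + ‖T_m σ‖) exp (2‖σ‖)`, where `‖T_m σ‖` is the
ℓ²-norm of the tail `(σ j)_{2|j| ≥ |m|}`. -/
theorem stmt_4 (σ : ℤ → ℂ) (hσ : Summable fun j => ‖σ j‖ ^ 2) (m : ℤ) (hm : 2 ≤ |m|) :
    ‖(∏' j : {j : ℤ // j ≠ m}, (1 + σ (j : ℤ) / (((j : ℤ) - m : ℤ) : ℂ))) - 1‖ ≤
      2 * (Real.sqrt (∑' j, ‖σ j‖ ^ 2) / Real.sqrt ((|m| : ℝ) - 1)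
          + Real.sqrt (∑' j : {j : ℤ // |m| ≤ 2 * |(j : ℤ)|}, ‖σ (j : ℤ)‖ ^ 2))
        * Real.exp (2 * Real.sqrt (∑' j, ‖σ j‖ ^ 2)) := by
  have s4 : Real.sqrt 4 = 2 := by
    rw [show (4 : ℝ) = 2 ^ 2 by norm_num, Real.sqrt_sq (by norm_num)]
  have hfin : ∀ u : Finset ℤ, ∑ j ∈ u, ‖σ j‖ ^ 2 ≤ ∑' j, ‖σ j‖ ^ 2 :=
    fun u => hσ.sum_le_tsum u (fun _ _ => by positivity)
  have hS1 : ∀ u : Finset ℤ, ∑ j ∈ u, ‖σ j‖ * |((j - m : ℤ) : ℝ)|⁻¹ ≤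
      2 * Real.sqrt (∑' j, ‖σ j‖ ^ 2) := by
    intro u
    have := aux_cs σ u _ _ _ (hfin u) (aux_w m u)
    rw [s4] at this
    linarith
  have hS2 : ∀ u : Finset ℤ, ∑ j ∈ u, ‖σ j‖ * |((j - m : ℤ) : ℝ)|⁻¹ ≤
      2 * (Real.sqrt (∑' j, ‖σ j‖ ^ 2) / Real.sqrt ((|m| : ℝ) - 1)
          + Real.sqrt (∑' j : {j : ℤ // |m| ≤ 2 * |(j : ℤ)|}, ‖σ (j : ℤ)‖ ^ 2)) := by
    intro u
    have hT : ∑ j ∈ u with |m| ≤ 2 * |j|, ‖σ j‖ ^ 2 ≤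
        ∑' j : {j : ℤ // |m| ≤ 2 * |(j : ℤ)|}, ‖σ (j : ℤ)‖ ^ 2 := by
      rw [← Finset.sum_subtype_eq_sum_filter]
      exact (hσ.comp_injective Subtype.val_injective).sum_le_tsum _ (fun _ _ => by positivity)
    have h1 := aux_cs σ _ _ _ _ hT (aux_w m _)
    have h2 := aux_cs σ (u.filter fun j => ¬ |m| ≤ 2 * |j|) _ _ _ (hfin _)
      (aux_near m hm _ (fun j hj => (Finset.mem_filter.1 hj).2))
    rw [s4] at h1
    rw [Real.sqrt_div (by norm_num), s4] at h2
    rw [← Finset.sum_filter_add_sum_filter_not u (fun j => |m| ≤ 2 * |j|)]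
    refine (add_le_add h1 h2).trans (le_of_eq ?_)
    ring
  have hn : ∀ j : {j : ℤ // j ≠ m}, ‖σ (j : ℤ) / (((j : ℤ) - m : ℤ) : ℂ)‖ =
      ‖σ (j : ℤ)‖ * |(((j : ℤ) - m : ℤ) : ℝ)|⁻¹ := by
    intro j
    rw [norm_div, Complex.norm_intCast, div_eq_mul_inv]
  have hmap : ∀ t : Finset {j : ℤ // j ≠ m},
      ∑ j ∈ t, ‖σ (j : ℤ) / (((j : ℤ) - m : ℤ) : ℂ)‖ =
      ∑ j ∈ t.map (Function.Embedding.subtype _), ‖σ j‖ * |((j - m : ℤ) : ℝ)|⁻¹ := by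
    intro t
    rw [Finset.sum_map]
    exact Finset.sum_congr rfl fun j _ => hn j
  have hsum : Summable fun j : {j : ℤ // j ≠ m} => ‖σ (j : ℤ) / (((j : ℤ) - m : ℤ) : ℂ)‖ :=
    summable_of_sum_le (fun _ => norm_nonneg _) (fun t => (hmap t).le.trans (hS1 _))
  have hp := (multipliable_one_add_of_summable hsum).hasProd
  refine le_of_tendsto ((hp.sub_const 1).norm) (Filter.Eventually.of_forall fun t => ?_)
  refine (Finset.norm_prod_one_add_sub_one_le t _).trans ?_
  rw [hmap]
  have a1 := hS1 (t.map (Function.Embedding.subtype _))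
  have a2 := hS2 (t.map (Function.Embedding.subtype _))
  have a0 : 0 ≤ ∑ j ∈ t.map (Function.Embedding.subtype _), ‖σ j‖ * |((j - m : ℤ) : ℝ)|⁻¹ :=
    Finset.sum_nonneg fun _ _ => by positivity
  generalize ∑ j ∈ t.map (Function.Embedding.subtype _), ‖σ j‖ * |((j - m : ℤ) : ℝ)|⁻¹ = S at *
  have e1 : Real.exp S - 1 ≤ S * Real.exp S := by
    have b1 := Real.add_one_le_exp (-S)
    have b2 : Real.exp (-S) * Real.exp S = 1 := by rw [← Real.exp_add]; simp
    nlinarith [Real.exp_pos S]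
  refine e1.trans ?_
  have e2 := Real.exp_le_exp.2 a1
  exact mul_le_mul a2 e2 (Real.exp_pos _).le (a0.trans a2)
end

section
/- For every σ ∈ ℓ²(ℤ,ℂ) and every m ∈ ℤ with |m| ≥ 2, the series ∑_{j∈ℤ, j≠m} |σ_j|/|j − m| converges and is bounded by 2·(‖σ‖/(|m| − 1)^{1/2} + (∑_{j∈ℤ, 2|j| ≥ |m|} |σ_j|²)^{1/2}). -/
theorem cs_aux {f g : ℤ → ℝ} (hf : ∀ j, 0 ≤ f j) (hg : ∀ j, 0 ≤ g j)
    (sf : Summable fun j => f j ^ 2) (sg : Summable fun j => g j ^ 2) :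
    Summable (fun j => f j * g j) ∧
      ∑' j, f j * g j ≤ Real.sqrt (∑' j, f j ^ 2) * Real.sqrt (∑' j, g j ^ 2) := by
  have h := Real.inner_le_Lp_mul_Lq_tsum_of_nonneg (p := 2) (q := 2)
    Real.HolderConjugate.two_two hf hg (by simpa using sf) (by simpa using sg)
  have h' := Real.summable_mul_of_Lp_Lq_of_nonneg (p := 2) (q := 2)
    Real.HolderConjugate.two_two hf hg (by simpa using sf) (by simpa using sg)
  exact ⟨h', by simpa [Real.sqrt_eq_rpow] using h⟩

theorem zeta_aux (m : ℤ) : ∃ s : ℝ, s ≤ 4 ∧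
    HasSum (fun j : ℤ => (1 / ((|j - m| : ℤ) : ℝ)) ^ 2) s := by
  have h0 : HasSum (fun n : ℤ => (1 / ((|n| : ℤ) : ℝ)) ^ 2)
      (Real.pi ^ 2 / 6 + Real.pi ^ 2 / 6 - (1 / ((|(0:ℤ)| : ℤ) : ℝ)) ^ 2) := by
    apply HasSum.of_nat_of_neg (f := fun n : ℤ => (1 / ((|n| : ℤ) : ℝ)) ^ 2)
    · simpa using hasSum_zeta_two
    · simpa using hasSum_zeta_two
  refine ⟨_, ?_, (Equiv.subRight m).hasSum_iff.mpr h0⟩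
  have := Real.pi_lt_d2
  have := Real.pi_pos
  simp
  nlinarith

theorem stmt_8 (σ : ℤ → ℂ) (hσ : Summable fun j => ‖σ j‖ ^ 2) (m : ℤ) (hm : 2 ≤ |m|) :
    Summable (fun j : {j : ℤ // j ≠ m} => ‖σ (j : ℤ)‖ / ((|(j : ℤ) - m| : ℤ) : ℝ)) ∧
    (∑' j : {j : ℤ // j ≠ m}, ‖σ (j : ℤ)‖ / ((|(j : ℤ) - m| : ℤ) : ℝ)) ≤
      2 * (Real.sqrt (∑' j, ‖σ j‖ ^ 2) / Real.sqrt ((|m| : ℝ) - 1)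
          + Real.sqrt (∑' j : {j : ℤ // |m| ≤ 2 * |(j : ℤ)|}, ‖σ (j : ℤ)‖ ^ 2)) := by
  classical
  obtain ⟨s, hs4, hs⟩ := zeta_aux m
  set A : Set ℤ := {j : ℤ | |m| ≤ 2 * |j|} with hA
  let g : ℤ → ℝ := fun j => 1 / ((|j - m| : ℤ) : ℝ)
  have hg : ∀ j, 0 ≤ g j := fun j => by positivity
  let F : ℤ → ℝ := fun j => ‖σ j‖
  have hF : ∀ j, 0 ≤ F j := fun j => norm_nonneg _
  have sqA : (fun j => A.indicator F j ^ 2) = A.indicator (fun j => ‖σ j‖ ^ 2) := by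
    ext j; by_cases h : j ∈ A <;> simp [h, F]
  obtain ⟨a1, a2⟩ := cs_aux (f := A.indicator F) (g := g)
    (fun j => Set.indicator_nonneg (fun j _ => hF j) j) hg
    (by rw [sqA]; exact hσ.indicator A) hs.summable
  have hM1 : (2:ℝ) ≤ |(m:ℝ)| := by exact_mod_cast hm
  set k : ℤ := (|m| - 1) / 2 with hk
  let T : Finset ℤ := Finset.Icc (-k) k
  have hT : ∀ j ∉ T, (Aᶜ.indicator g j) ^ 2 = 0 := by
    intro j hj
    have : j ∈ A := by
      by_contra h
      apply hj
      simp only [hA, Set.mem_ofPred_eq, not_le] at h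
      rw [Finset.mem_Icc, ← abs_le]
      omega
    simp [this]
  have bsum : HasSum (fun j => (Aᶜ.indicator g j) ^ 2) (∑ j ∈ T, (Aᶜ.indicator g j) ^ 2) :=
    hasSum_sum_of_ne_finset_zero hT
  have bbd : ∑ j ∈ T, (Aᶜ.indicator g j) ^ 2 ≤ 4 / (|(m:ℝ)| - 1) := by
    have h1 : ∀ j ∈ T, (Aᶜ.indicator g j) ^ 2 ≤ 4 / (|(m:ℝ)| + 1) ^ 2 := by
      intro j hj
      by_cases h : j ∈ A
      · simp [h]; positivity
      · rw [Set.indicator_of_mem (by simpa using h)]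
        have h2 : |m| + 1 ≤ 2 * |j - m| := by
          simp only [hA, Set.mem_ofPred_eq, not_le] at h
          have := abs_sub_abs_le_abs_sub m j
          rw [abs_sub_comm] at this
          omega
        have h3 : |(m:ℝ)| + 1 ≤ 2 * ((|j - m| : ℤ) : ℝ) := by exact_mod_cast h2
        have h4 : g j ≤ 2 / (|(m:ℝ)| + 1) := by
          simp only [g]
          rw [div_le_div_iff₀ (by linarith) (by linarith)]
          linarith
        calc g j ^ 2 ≤ (2 / (|(m:ℝ)| + 1)) ^ 2 := by gcongr
          _ = _ := by rw [div_pow]; norm_num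
    have h2 := Finset.sum_le_card_nsmul T _ _ h1
    have hc : ((T.card : ℕ) : ℝ) ≤ |(m:ℝ)| := by
      have : ((T.card : ℕ) : ℤ) ≤ |m| := by
        simp only [T, Int.card_Icc]; omega
      exact_mod_cast this
    refine h2.trans ?_
    rw [nsmul_eq_mul]
    calc _ ≤ |(m:ℝ)| * (4 / (|(m:ℝ)| + 1) ^ 2) := by gcongr
      _ ≤ _ := by
        rw [mul_div_assoc', div_le_div_iff₀ (by positivity) (by linarith)]
        nlinarith
  obtain ⟨b1, b2⟩ := cs_aux (f := F) (g := Aᶜ.indicator g) hF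
    (fun j => Set.indicator_nonneg (fun j _ => hg j) j) hσ bsum.summable
  have key : (fun j : ℤ => ‖σ j‖ / ((|j - m| : ℤ) : ℝ)) =
      fun j => F j * Aᶜ.indicator g j + A.indicator F j * g j := by
    ext j; by_cases h : j ∈ A <;> simp [h, F, g, div_eq_mul_inv]
  have supp : Function.support (fun j : ℤ => ‖σ j‖ / ((|j - m| : ℤ) : ℝ)) ⊆ {j | j ≠ m} := by
    intro j hj h
    apply hj
    simp [h]
  have tot : Summable (fun j : ℤ => ‖σ j‖ / ((|j - m| : ℤ) : ℝ)) := by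
    rw [key]; exact b1.add a1
  refine ⟨tot.subtype {j | j ≠ m}, ?_⟩
  have e1 := tsum_subtype_eq_of_support_subset supp
  have e2 := tsum_subtype A (fun j => ‖σ j‖ ^ 2)
  change (∑' j : ({j | j ≠ m} : Set ℤ), ‖σ (j : ℤ)‖ / ((|(j : ℤ) - m| : ℤ) : ℝ)) ≤
      2 * (Real.sqrt (∑' j, ‖σ j‖ ^ 2) / Real.sqrt ((|m| : ℝ) - 1)
          + Real.sqrt (∑' j : A, ‖σ (j : ℤ)‖ ^ 2))
  rw [e1, e2, key, b1.tsum_add a1, ← sqA, mul_add]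
  refine add_le_add (b2.trans ?_) (a2.trans ?_)
  · rw [bsum.tsum_eq]
    have : √(∑ j ∈ T, (Aᶜ.indicator g j) ^ 2) ≤ 2 / √(|(m:ℝ)| - 1) := by
      refine (Real.sqrt_le_sqrt bbd).trans ?_
      rw [Real.sqrt_div (by norm_num), show (4:ℝ) = 2 ^ 2 by norm_num,
        Real.sqrt_sq (by norm_num)]
    calc _ ≤ √(∑' j, F j ^ 2) * (2 / √(|(m:ℝ)| - 1)) := by gcongr
      _ = _ := by simp only [F]; ring
  · rw [mul_comm]
    gcongr
    simp only [g]
    rw [hs.tsum_eq, Real.sqrt_le_left (by norm_num)]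
    linarith
end

section
/- Let a, b ∈ ℂ and let [a,b] := {t·a + (1−t)·b : t ∈ [0,1]} be the closed segment joining them. Let U ⊆ ℂ be open with [a,b] ⊆ U, let f : ℂ → ℂ be holomorphic on U, and let w : ℂ → ℂ be holomorphic on ℂ ∖ [a,b] with w(λ)² = (λ − a)(λ − b) for all λ ∉ [a,b]. Let γ : [0,1] → ℂ be a continuously differentiable closed curve (γ(0) = γ(1)) whose image is contained in U ∖ [a,b], such that for every z ∈ [a,b] the winding number (1/(2πi))·∫₀¹ γ′(t)/(γ(t) − z) dt equals 1, and for every z ∈ ℂ ∖ U this winding number equals 0. Then |∫₀¹ (f(γ(t))/w(γ(t)))·γ′(t) dt| ≤ 2π · max_{λ ∈ [a,b]} |f(λ)|. -/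
open Set
open Metric Filter Topology MeasureTheory

lemma par_int (G : ℝ → ℂ → ℂ) (z0 : ℂ) (r M : ℝ) (hr : 0 < r)
    (hG : ∀ t, DifferentiableOn ℂ (G t) (ball z0 r))
    (hM : ∀ t, ∀ z ∈ ball z0 r, ‖G t z‖ ≤ M)
    (hc : ∀ z ∈ ball z0 r, Continuous fun t => G t z) :
    HasDerivAt (fun z => ∫ t in (0:ℝ)..1, G t z) (∫ t in (0:ℝ)..1, deriv (G t) z0) z0 := by
  have hda : ∀ t, ∀ z ∈ ball z0 r, HasDerivAt (G t) (deriv (G t) z) z := fun t z hz =>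
    ((hG t).differentiableAt (isOpen_ball.mem_nhds hz)).hasDerivAt
  have hz0 : z0 ∈ ball z0 r := mem_ball_self hr
  refine (intervalIntegral.hasDerivAt_integral_of_dominated_loc_of_deriv_le
    (F := fun z t => G t z) (F' := fun z t => deriv (G t) z) (s := ball z0 (r/2))
    (bound := fun _ => M / (r/4)) (ball_mem_nhds z0 (by positivity)) ?_ ?_ ?_ ?_ ?_ ?_).2
  · filter_upwards [ball_mem_nhds z0 hr] with z hz
    exact (hc z hz).aestronglyMeasurable
  · exact (hc z0 hz0).intervalIntegrable _ _
  · -- measurability of the derivative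
    let u : ℕ → ℂ := fun n => ((r / (n + 2) : ℝ) : ℂ)
    have hu0 : Tendsto u atTop (𝓝 0) := by
      have h1 : Tendsto (fun n : ℕ => r / ((n:ℝ) + 2)) atTop (𝓝 0) :=
        tendsto_const_nhds.div_atTop
          (tendsto_atTop_add_const_right _ _ tendsto_natCast_atTop_atTop)
      have := (Complex.continuous_ofReal.tendsto 0).comp h1
      rw [Complex.ofReal_zero] at this
      exact this
    have hune : ∀ n, u n ≠ 0 := by
      intro n
      have : (0:ℝ) < r / (n+2) := by positivity
      exact Complex.ofReal_ne_zero.2 this.ne'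
    have humem : ∀ n, z0 + u n ∈ ball z0 r := by
      intro n
      have h2 : (0:ℝ) < r / (n+2) := by positivity
      have h3 : r / ((n:ℝ)+2) < r := by
        apply div_lt_self hr
        have : (0:ℝ) ≤ n := n.cast_nonneg
        linarith
      simp only [mem_ball, dist_self_add_left, u, Complex.norm_real, Real.norm_eq_abs, abs_of_pos h2]
      exact h3
    have hune' : Tendsto u atTop (𝓝[≠] 0) :=
      tendsto_nhdsWithin_iff.2 ⟨hu0, Eventually.of_forall hune⟩
    refine aestronglyMeasurable_of_tendsto_ae atTop
      (f := fun n t => (u n)⁻¹ • (G t (z0 + u n) - G t z0)) ?_ ?_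
    · intro n
      have : Continuous fun t => (u n)⁻¹ • (G t (z0 + u n) - G t z0) :=
        continuous_const.fun_smul ((hc _ (humem n)).fun_sub (hc z0 hz0))
      exact this.aestronglyMeasurable
    · refine Eventually.of_forall fun t => ?_
      exact (hasDerivAt_iff_tendsto_slope_zero.1 (hda t z0 hz0)).comp hune'
  · refine Eventually.of_forall fun t _ z hz => ?_
    have hsub : closedBall z (r/4) ⊆ ball z0 r := by
      intro y hy
      rw [mem_closedBall] at hy
      rw [mem_ball] at hz ⊢
      linarith [dist_triangle y z z0]
    refine Complex.norm_deriv_le_of_forall_mem_sphere_norm_le (by positivity) ?_ ?_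
    · refine DifferentiableOn.diffContOnCl ?_
      rw [closure_ball _ (by positivity)]
      exact (hG t).mono hsub
    · intro y hy
      exact hM t y (hsub (sphere_subset_closedBall hy))
  · exact intervalIntegrable_const
  · refine Eventually.of_forall fun t _ z hz => ?_
    exact hda t z (ball_subset_ball (by linarith) hz)

/-- Cauchy transform is differentiable off the curve. -/
lemma cauchy_tr (p g : ℝ → ℂ) (hp : Continuous p) (hg : Continuous g)
    (K : IsCompact (range p)) (M : ℝ) (hM : ∀ t, ‖g t‖ ≤ M) (z0 : ℂ) (hz0 : z0 ∉ range p) :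
    HasDerivAt (fun z => ∫ t in (0:ℝ)..1, g t / (p t - z))
      (∫ t in (0:ℝ)..1, g t / (p t - z0) ^ 2) z0 := by
  obtain ⟨e, he, hb⟩ := Metric.isOpen_iff.1 K.isClosed.isOpen_compl z0 hz0
  have hne : ∀ t, ∀ z ∈ ball z0 e, p t - z ≠ 0 := by
    intro t z hz h
    exact hb hz ⟨t, sub_eq_zero.1 h⟩
  have hder : ∀ t, ∀ z ∈ ball z0 e, HasDerivAt (fun z => g t / (p t - z)) (g t / (p t - z)^2) z := by
    intro t z hz
    have := (((hasDerivAt_id z).const_sub (p t)).fun_inv (hne t z hz)).const_mul (g t)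
    simp only [← div_eq_mul_inv] at this
    refine this.congr_deriv ?_
    simp [div_eq_mul_inv]
  have := par_int (fun t z => g t / (p t - z)) z0 (e/2) (M / (e/2)) (by positivity) ?_ ?_ ?_
  · convert this using 1
    refine intervalIntegral.integral_congr fun t _ => ?_
    exact (hder t z0 (mem_ball_self he)).deriv.symm
  · intro t z hz
    exact (hder t z (ball_subset_ball (by linarith) hz)).differentiableAt.differentiableWithinAt
  · intro t z hz
    have h1 : e/2 ≤ ‖p t - z‖ := by
      have h2 : p t ∉ ball z0 e := fun h => hb h ⟨t, rfl⟩
      rw [mem_ball, not_lt] at h2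
      rw [mem_ball] at hz
      rw [← dist_eq_norm]
      linarith [dist_triangle (p t) z z0]
    rw [norm_div]
    have := (norm_nonneg _).trans (hM t)
    gcongr
    exact hM t
  · intro z hz
    exact hg.div (hp.sub continuous_const) fun t => hne t z (ball_subset_ball (by linarith) hz)

lemma wind_locconst (p v : ℝ → ℂ) (hp : Continuous p) (hv : Continuous v)
    (hd : ∀ t ∈ Ioo (0:ℝ) 1, HasDerivAt p (v t) t) (hcl : p 0 = p 1)
    (K : IsCompact (range p)) (M : ℝ) (hM : ∀ t, ‖v t‖ ≤ M) (z0 : ℂ) (hz0 : z0 ∉ range p) :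
    ∀ᶠ z in 𝓝 z0, z ∉ range p ∧ ∫ t in (0:ℝ)..1, v t / (p t - z) =
      ∫ t in (0:ℝ)..1, v t / (p t - z0) := by
  obtain ⟨e, he, hb⟩ := Metric.isOpen_iff.1 K.isClosed.isOpen_compl z0 hz0
  have hder : ∀ z ∈ ball z0 e, HasDerivAt (fun z => ∫ t in (0:ℝ)..1, v t / (p t - z)) 0 z := by
    intro z hz
    have hz' := hb hz
    have h := cauchy_tr p v hp hv K M hM z hz'
    have hne : ∀ t, p t - z ≠ 0 := fun t h => hz' ⟨t, sub_eq_zero.1 h⟩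
    have h0 : ∫ t in (0:ℝ)..1, v t / (p t - z) ^ 2 = 0 := by
      rw [intervalIntegral.integral_eq_sub_of_hasDerivAt_of_le (f := fun t => -(p t - z)⁻¹)
        zero_le_one]
      · simp [hcl]
      · exact ((hp.sub continuous_const).inv₀ hne).neg.continuousOn
      · intro t ht
        have := (((hd t ht).sub_const z).fun_inv (hne t)).fun_neg
        refine this.congr_deriv ?_
        rw [neg_div, neg_neg]
      · exact (hv.div ((hp.sub continuous_const).pow 2)
          fun t => pow_ne_zero 2 (hne t)).intervalIntegrable _ _
    rwa [h0] at h
  filter_upwards [ball_mem_nhds z0 he] with z hz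
  refine ⟨hb hz, ?_⟩
  exact isOpen_ball.is_const_of_deriv_eq_zero (convex_ball z0 e).isPreconnected
    (fun z hz => (hder z hz).differentiableAt.differentiableWithinAt)
    (fun z hz => (hder z hz).deriv) hz (mem_ball_self he)

lemma wind_far (p v : ℝ → ℂ) (hp : Continuous p) (hv : Continuous v)
    (hd : ∀ t ∈ Ioo (0:ℝ) 1, HasDerivAt p (v t) t) (hcl : p 0 = p 1)
    (R : ℝ) (hR : ∀ t, ‖p t‖ < R) (z : ℂ) (hz : R ≤ ‖z‖) :
    ∫ t in (0:ℝ)..1, v t / (p t - z) = 0 := by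
  have hne' : ∀ x ∈ ball (0:ℂ) R, x - z ≠ 0 := by
    intro x hx h
    rw [sub_eq_zero.1 h] at hx
    simp at hx
    linarith
  have hd1 : DifferentiableOn ℂ (fun x => (x - z)⁻¹) (ball 0 R) := by
    intro x hx
    exact ((differentiableAt_id.sub_const z).inv (hne' x hx)).differentiableWithinAt
  obtain ⟨F, hF⟩ := hd1.isExactOn_ball
  have hm : ∀ t, p t ∈ ball (0:ℂ) R := fun t => by simpa using hR t
  have hFd : ∀ t, HasDerivAt F ((p t - z)⁻¹) (p t) := fun t => hF _ (hm t)
  rw [intervalIntegral.integral_eq_sub_of_hasDerivAt_of_le (f := fun t => F (p t))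
        zero_le_one]
  · simp [hcl]
  · refine Continuous.continuousOn ?_
    rw [continuous_iff_continuousAt]
    intro t
    exact (hFd t).continuousAt.comp hp.continuousAt
  · intro t ht
    have := HasDerivAt.comp t (hFd t) (hd t ht)
    refine this.congr_deriv ?_
    rw [div_eq_mul_inv, mul_comm]
  · exact (hv.div (hp.sub continuous_const) fun t => hne' _ (hm t)).intervalIntegrable _ _

lemma dslope_bdd (U : Set ℂ) (hU : IsOpen U) (f : ℂ → ℂ) (hf : DifferentiableOn ℂ f U)
    (p : ℝ → ℂ) (hp : Continuous p) (K : IsCompact (range p)) (hpU : ∀ t, p t ∈ U)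
    (z0 : ℂ) (hz0 : z0 ∈ U) :
    ∃ r > 0, ball z0 r ⊆ U ∧ ∃ M, ∀ t, ∀ z ∈ ball z0 r, ‖dslope f (p t) z‖ ≤ M := by
  obtain ⟨e, he, hb⟩ := Metric.isOpen_iff.1 hU z0 hz0
  have hsub : closedBall z0 (e/2) ⊆ U := (closedBall_subset_ball (by linarith)).trans hb
  have hfd : ∀ x ∈ U, DifferentiableAt ℂ f x := fun x hx => hf.differentiableAt (hU.mem_nhds hx)
  obtain ⟨C1, hC1⟩ := (isCompact_closedBall z0 (e/2)).exists_bound_of_continuousOn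
    ((hf.deriv hU).continuousOn.mono hsub)
  obtain ⟨C2, hC2⟩ := (isCompact_closedBall z0 (e/2)).exists_bound_of_continuousOn
    (hf.continuousOn.mono hsub)
  obtain ⟨C3, hC3⟩ := K.exists_bound_of_continuousOn
    (hf.continuousOn.mono (range_subset_iff.2 hpU))
  refine ⟨e/4, by positivity, (ball_subset_ball (by linarith)).trans hb,
    max C1 ((C2 + C3) / (e/4)), fun t z hz => ?_⟩
  have hz2 : z ∈ closedBall z0 (e/2) := by
    rw [mem_ball] at hz; rw [mem_closedBall]; linarith
  by_cases hpt : p t ∈ closedBall z0 (e/2)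
  · refine le_trans ?_ (le_max_left _ _)
    by_cases hzp : z = p t
    · rw [hzp, dslope_same]; exact hC1 _ hpt
    · rw [dslope_of_ne _ hzp, slope_def_field, norm_div]
      rw [div_le_iff₀ (norm_pos_iff.2 (sub_ne_zero.2 hzp))]
      exact (convex_closedBall z0 (e/2)).norm_image_sub_le_of_norm_deriv_le
        (fun x hx => hfd x (hsub hx)) hC1 hpt hz2
  · refine le_trans ?_ (le_max_right _ _)
    have hzp : z ≠ p t := fun h => hpt (h ▸ hz2)
    have h1 : e/4 ≤ ‖z - p t‖ := by
      rw [mem_closedBall, not_le] at hpt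
      rw [mem_ball] at hz
      rw [← dist_eq_norm, dist_comm]
      linarith [dist_triangle (p t) z z0]
    rw [dslope_of_ne _ hzp, slope_def_field, norm_div]
    have h2 : ‖f z - f (p t)‖ ≤ C2 + C3 :=
      (norm_sub_le _ _).trans (add_le_add (hC2 _ hz2) (hC3 _ ⟨t, rfl⟩))
    have := (norm_nonneg _).trans h2
    gcongr

lemma dslope_symm (f : ℂ → ℂ) (x y : ℂ) : dslope f x y = dslope f y x := by
  by_cases h : x = y
  · rw [h]
  · rw [dslope_of_ne _ (Ne.symm h), dslope_of_ne _ h, slope_comm]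

lemma cauchy_hom (U : Set ℂ) (hU : IsOpen U) (f : ℂ → ℂ) (hf : DifferentiableOn ℂ f U)
    (p v : ℝ → ℂ) (hp : Continuous p) (hv : Continuous v)
    (hd : ∀ t ∈ Ioo (0:ℝ) 1, HasDerivAt p (v t) t) (hcl : p 0 = p 1)
    (K : IsCompact (range p)) (V : ℝ) (hV : ∀ t, ‖v t‖ ≤ V) (hpU : ∀ t, p t ∈ U)
    (h0 : ∀ z ∉ U, ∫ t in (0:ℝ)..1, v t / (p t - z) = 0)
    (z : ℂ) (hz : z ∈ U) (hzp : z ∉ range p) :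
    ∫ t in (0:ℝ)..1, f (p t) * v t / (p t - z) =
      f z * ∫ t in (0:ℝ)..1, v t / (p t - z) := by
  classical
  have hV0 : 0 ≤ V := (norm_nonneg _).trans (hV 0)
  have hfp : Continuous fun t => f (p t) := by
    rw [continuous_iff_continuousAt]
    intro t
    exact ((hf.continuousOn.continuousAt (hU.mem_nhds (hpU t)))).comp hp.continuousAt
  have hg : Continuous fun t => f (p t) * v t := hfp.mul hv
  obtain ⟨C3, hC3⟩ := K.exists_bound_of_continuousOn
    (hf.continuousOn.mono (range_subset_iff.2 hpU))
  have hC30 : 0 ≤ C3 := (norm_nonneg _).trans (hC3 (p 0) ⟨0, rfl⟩)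
  have hgb : ∀ t, ‖f (p t) * v t‖ ≤ C3 * V := by
    intro t
    rw [norm_mul]
    have h1 := hC3 (p t) ⟨t, rfl⟩
    have h2 := hV t
    gcongr
  -- relation
  have hrel : ∀ z ∉ range p, ∫ t in (0:ℝ)..1, dslope f (p t) z * v t =
      (∫ t in (0:ℝ)..1, f (p t) * v t / (p t - z)) - f z * ∫ t in (0:ℝ)..1, v t / (p t - z) := by
    intro z hz
    have hne : ∀ t, p t - z ≠ 0 := fun t h => hz ⟨t, sub_eq_zero.1 h⟩
    rw [← intervalIntegral.integral_const_mul, ← intervalIntegral.integral_sub]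
    · refine intervalIntegral.integral_congr fun t _ => ?_
      have h1 : p t ≠ z := sub_ne_zero.1 (hne t)
      rw [dslope_symm, dslope_of_ne _ h1, slope_def_field]
      ring
    · exact (hg.div (hp.sub continuous_const) hne).intervalIntegrable _ _
    · exact (continuous_const.mul (hv.div (hp.sub continuous_const) hne)).intervalIntegrable _ _
  let H : ℂ → ℂ := fun z => if z ∈ U then ∫ t in (0:ℝ)..1, dslope f (p t) z * v t else
    ∫ t in (0:ℝ)..1, f (p t) * v t / (p t - z)
  have hH2 : ∀ z ∉ range p, ∫ t in (0:ℝ)..1, v t / (p t - z) = 0 →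
      H z = ∫ t in (0:ℝ)..1, f (p t) * v t / (p t - z) := by
    intro z hz hn
    simp only [H]
    split_ifs with h
    · rw [hrel z hz, hn]; ring
    · rfl
  have hHd : Differentiable ℂ H := by
    intro z0
    by_cases hz0 : z0 ∈ U
    · obtain ⟨r, hr, hrU, M, hM⟩ := dslope_bdd U hU f hf p hp K hpU z0 hz0
      have hpar := par_int (fun t z => dslope f (p t) z * v t) z0 r (M * V) hr ?_ ?_ ?_
      · refine hpar.differentiableAt.congr_of_eventuallyEq ?_
        filter_upwards [hU.mem_nhds hz0] with z hz
        simp only [H, if_pos hz]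
      · intro t
        exact (((Complex.differentiableOn_dslope (hU.mem_nhds (hpU t))).2 hf).mono hrU).mul_const _
      · intro t z hz
        rw [norm_mul]
        have h1 := hM t z hz
        have h2 := hV t
        have := (norm_nonneg _).trans h1
        gcongr
      · intro z hz
        refine Continuous.mul ?_ hv
        have h1 : ContinuousOn (dslope f z) U := (continuousOn_dslope (hU.mem_nhds (hrU hz))).2
          ⟨hf.continuousOn, hf.differentiableAt (hU.mem_nhds (hrU hz))⟩
        rw [continuous_iff_continuousAt]
        intro t
        simp_rw [dslope_symm f _ z]
        exact ((h1.continuousAt (hU.mem_nhds (hpU t)))).comp hp.continuousAt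
    · have hz0p : z0 ∉ range p := by
        rintro ⟨t, rfl⟩; exact hz0 (hpU t)
      refine (cauchy_tr p _ hp hg K _ hgb z0 hz0p).differentiableAt.congr_of_eventuallyEq ?_
      filter_upwards [wind_locconst p v hp hv hd hcl K V hV z0 hz0p] with z hz
      exact hH2 z hz.1 (hz.2.trans (h0 z0 hz0))
  obtain ⟨R, hR⟩ := K.isBounded.exists_norm_le
  have hR' : ∀ t, ‖p t‖ < R + 1 := fun t => (hR _ ⟨t, rfl⟩).trans_lt (by linarith)
  have hlim : Tendsto H (cocompact ℂ) (𝓝 0) := by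
    have hlim2 : Tendsto (fun z : ℂ => C3 * V / (‖z‖ - (R+1))) (cocompact ℂ) (𝓝 0) :=
      tendsto_const_nhds.div_atTop (tendsto_atTop_add_const_right _ _ tendsto_norm_cocompact_atTop)
    refine squeeze_zero_norm' ?_ hlim2
    filter_upwards [tendsto_norm_cocompact_atTop.eventually_gt_atTop (R+1)] with z hz
    have hzr : z ∉ range p := by
      rintro ⟨t, rfl⟩; linarith [hR' t]
    rw [hH2 z hzr (wind_far p v hp hv hd hcl (R+1) hR' z hz.le)]
    have := intervalIntegral.norm_integral_le_of_norm_le_const (a := 0) (b := 1)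
      (f := fun t => f (p t) * v t / (p t - z)) (C := C3 * V / (‖z‖ - (R+1))) ?_
    · simpa using this
    · intro t _
      rw [norm_div]
      have h1 : ‖z‖ - (R+1) ≤ ‖p t - z‖ := by
        have := norm_sub_norm_le z (p t)
        rw [norm_sub_rev] at this
        linarith [hR' t]
      have h2 := hgb t
      have h3 : 0 < ‖z‖ - (R+1) := by linarith
      have h4 : 0 ≤ C3 * V := by positivity
      gcongr
  have hHz := hHd.apply_eq_of_tendsto_cocompact z hlim
  simp only [H, if_pos hz] at hHz
  rw [hrel z hzp] at hHz
  exact sub_eq_zero.1 hHz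

lemma joukowski (u : ℂ) (hu : ∀ x : ℝ, x ∈ Icc (-1:ℝ) 1 → u ≠ x) :
    ∃ q : ℂ, q ≠ 0 ∧ ‖q‖ < 1 ∧ u = (q + q⁻¹) / 2 := by
  obtain ⟨s, hs⟩ := IsAlgClosed.exists_pow_nat_eq (u^2 - 1) (n := 2) (by norm_num)
  have h12 : (u + s) * (u - s) = 1 := by linear_combination -hs
  have h1 : u + s ≠ 0 := left_ne_zero_of_mul_eq_one h12
  have h2 : u - s ≠ 0 := right_ne_zero_of_mul_eq_one h12
  have hi1 : (u + s)⁻¹ = u - s := inv_eq_of_mul_eq_one_right h12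
  have hi2 : (u - s)⁻¹ = u + s := inv_eq_of_mul_eq_one_left h12
  have hn : ‖u + s‖ * ‖u - s‖ = 1 := by rw [← norm_mul, h12, norm_one]
  rcases lt_trichotomy ‖u + s‖ 1 with h | h | h
  · exact ⟨u + s, h1, h, by rw [hi1]; ring⟩
  · exfalso
    have h3 : (u+s)⁻¹ = (starRingEnd ℂ) (u + s) := Complex.inv_eq_conj h
    refine hu (u+s).re (abs_le.1 ((Complex.abs_re_le_norm _).trans h.le)) ?_
    have h4 := Complex.add_conj (u+s)
    rw [← h3, hi1] at h4
    push_cast at h4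
    linear_combination h4 / 2
  · refine ⟨u - s, h2, ?_, by rw [hi2]; ring⟩
    have := norm_pos_iff.2 h2
    nlinarith

lemma cos_int (u : ℂ) (hu : ∀ x : ℝ, x ∈ Icc (-1:ℝ) 1 → u ≠ x) :
    (∫ θ in (0:ℝ)..(2 * Real.pi), 1 / (u - (Real.cos θ : ℂ))) ^ 2 * (u ^ 2 - 1) =
      (2 * Real.pi) ^ 2 := by
  obtain ⟨q, hq0, hq1, hq⟩ := joukowski u hu
  have hne : ∀ x ∈ closedBall (0:ℂ) 1, 1 - q * x ≠ 0 := by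
    intro x hx h
    have h1 : ‖q * x‖ = 1 := by rw [← sub_eq_zero.1 h, norm_one]
    rw [norm_mul] at h1
    rw [mem_closedBall_zero_iff] at hx
    nlinarith [norm_nonneg q, norm_nonneg x]
  have hdc : DiffContOnCl ℂ (fun x => (1 - q * x)⁻¹) (ball 0 1) := by
    refine DifferentiableOn.diffContOnCl ?_
    rw [closure_ball _ one_ne_zero]
    intro x hx
    exact (((differentiableAt_id.const_mul q).const_sub 1).inv (hne x hx)).differentiableWithinAt
  have hci := hdc.circleIntegral_sub_inv_smul (w := q) (by simpa using hq1)
  have hq2 : 1 - q * q ≠ 0 := hne q (by simpa using hq1.le)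
  have hI : ∫ θ in (0:ℝ)..(2 * Real.pi), 1 / (u - (Real.cos θ : ℂ)) =
      2 * q / Complex.I * ((2 * Real.pi * Complex.I) • (1 - q * q)⁻¹) := by
    rw [← hci, circleIntegral, ← intervalIntegral.integral_const_mul]
    refine intervalIntegral.integral_congr fun θ _ => ?_
    simp only [deriv_circleMap, smul_eq_mul, circleMap, zero_add, Complex.ofReal_one, one_mul]
    set x := Complex.exp (θ * Complex.I) with hx
    have hxn : ‖x‖ = 1 := Complex.norm_exp_ofReal_mul_I θ
    have hx0 : x ≠ 0 := Complex.exp_ne_zero _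
    have h1 : 1 - q * x ≠ 0 := hne x (by simp [hxn])
    have h2 : x - q ≠ 0 := by
      intro h
      rw [sub_eq_zero.1 h] at hxn
      linarith
    have hc : (Real.cos θ : ℂ) = (x + x⁻¹) / 2 := by
      rw [Complex.ofReal_cos, Complex.cos, hx, ← Complex.exp_neg]
      ring_nf
    have h3 : u - (Real.cos θ : ℂ) = (1 - q * x) * (x - q) / (2 * q * x) := by
      rw [hc, hq]
      field_simp
      ring
    rw [h3]
    have := Complex.I_ne_zero
    field_simp
  rw [hI, hq, smul_eq_mul]
  have := Complex.I_ne_zero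
  have h3 : 1 - q ^ 2 ≠ 0 := by rwa [pow_two]
  field_simp
  ring

lemma seg_cos (a b : ℂ) (x : ℝ) (hx : x ∈ Icc (-1:ℝ) 1) :
    (a + b) / 2 + (b - a) / 2 * x ∈ segment ℝ a b := by
  rw [segment_eq_image]
  refine ⟨(1 + x) / 2, ⟨by linarith [hx.1], by linarith [hx.2]⟩, ?_⟩
  simp only [Complex.real_smul]
  push_cast
  ring

lemma seg_int (a b z : ℂ) (hz : z ∉ segment ℝ a b) :
    (∫ θ in (0:ℝ)..(2 * Real.pi), 1 / (z - ((a + b) / 2 + (b - a) / 2 * (Real.cos θ : ℂ)))) ^ 2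
      * ((z - a) * (z - b)) = (2 * Real.pi) ^ 2 := by
  by_cases hab : a = b
  · subst hab
    have h1 : z - a ≠ 0 := by
      intro h
      rw [sub_eq_zero.1 h] at hz
      exact hz (left_mem_segment ℝ a a)
    have h2 : (a + a) / 2 = a := by ring
    simp only [sub_self, zero_div, zero_mul, add_zero, h2, intervalIntegral.integral_const, sub_zero,
      Complex.real_smul]
    push_cast
    field_simp
  · have hd : b - a ≠ 0 := sub_ne_zero.2 (Ne.symm hab)
    set u : ℂ := (z - (a + b) / 2) / ((b - a) / 2) with hu
    have hzu : z = (a + b) / 2 + (b - a) / 2 * u := by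
      rw [hu]; field_simp; ring
    have hux : ∀ x : ℝ, x ∈ Icc (-1:ℝ) 1 → u ≠ x := by
      intro x hx h
      apply hz
      rw [hzu, h]
      exact seg_cos a b x hx
    have hJ : ∫ θ in (0:ℝ)..(2 * Real.pi), 1 / (z - ((a + b) / 2 + (b - a) / 2 * (Real.cos θ : ℂ))) =
        2 / (b - a) * ∫ θ in (0:ℝ)..(2 * Real.pi), 1 / (u - (Real.cos θ : ℂ)) := by
      rw [← intervalIntegral.integral_const_mul]
      refine intervalIntegral.integral_congr fun θ _ => ?_
      have h1 : u - (Real.cos θ : ℂ) ≠ 0 :=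
        sub_ne_zero.2 (hux _ ⟨Real.neg_one_le_cos θ, Real.cos_le_one θ⟩)
      have h2 : z - ((a + b) / 2 + (b - a) / 2 * (Real.cos θ : ℂ)) =
        (b - a) / 2 * (u - (Real.cos θ : ℂ)) := by
        rw [hzu]; ring
      simp only [h2]
      field_simp
    have h3 := cos_int u hux
    rw [hJ, ← h3]
    have h4 : (z - a) * (z - b) = ((b - a) / 2) ^ 2 * (u ^ 2 - 1) := by
      rw [hzu]; ring
    rw [h4]
    field_simp

/-- Let `[a,b]` be the closed segment joining `a, b ∈ ℂ`, let `U ⊇ [a,b]` be open,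
`f` holomorphic on `U`, and `w` holomorphic on `ℂ ∖ [a,b]` with `w(λ)² = (λ-a)(λ-b)`
off the segment. If `γ : [0,1] → ℂ` is a `C¹` closed curve in `U ∖ [a,b]` with winding
number `1` around every point of `[a,b]` and `0` around every point outside `U`, then
`|∮_γ f/w dλ| ≤ 2π max_{λ ∈ [a,b]} |f(λ)|`. -/
theorem stmt_9 (a b : ℂ) (U : Set ℂ) (hU : IsOpen U)
    (hab : segment ℝ a b ⊆ U) (f w : ℂ → ℂ)
    (hf : DifferentiableOn ℂ f U)
    (hw : DifferentiableOn ℂ w (segment ℝ a b)ᶜ)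
    (hw2 : ∀ z ∉ segment ℝ a b, (w z) ^ 2 = (z - a) * (z - b))
    (γ : ℝ → ℂ) (hγ : ContDiffOn ℝ 1 γ (Icc 0 1))
    (hclosed : γ 0 = γ 1)
    (him : γ '' Icc 0 1 ⊆ U \ segment ℝ a b)
    (hwind1 : ∀ z ∈ segment ℝ a b,
      (1 / (2 * Real.pi * Complex.I)) *
        ∫ t in (0:ℝ)..1, derivWithin γ (Icc 0 1) t / (γ t - z) = 1)
    (hwind0 : ∀ z ∉ U,
      (1 / (2 * Real.pi * Complex.I)) *
        ∫ t in (0:ℝ)..1, derivWithin γ (Icc 0 1) t / (γ t - z) = 0) :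
    ‖∫ t in (0:ℝ)..1, (f (γ t) / w (γ t)) * derivWithin γ (Icc 0 1) t‖ ≤
      2 * Real.pi * sSup ((fun z => ‖f z‖) '' segment ℝ a b) := by
  have hpi : (2 * Real.pi * Complex.I : ℂ) ≠ 0 := Complex.two_pi_I_ne_zero
  have hpi' : (2 * Real.pi : ℂ) ≠ 0 := left_ne_zero_of_mul hpi
  -- extend to the line
  let pr : ℝ → ℝ := fun t => (projIcc (0:ℝ) 1 zero_le_one t : ℝ)
  have hpr : Continuous pr := continuous_subtype_val.comp continuous_projIcc
  have hprm : ∀ t, pr t ∈ Icc (0:ℝ) 1 := fun t => (projIcc (0:ℝ) 1 zero_le_one t).2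
  have hpre : ∀ t ∈ Icc (0:ℝ) 1, pr t = t := fun t ht => by
    simp only [pr, projIcc_of_mem zero_le_one ht]
  have hγ' : ContinuousOn (derivWithin γ (Icc 0 1)) (Icc 0 1) :=
    hγ.continuousOn_derivWithin (uniqueDiffOn_Icc zero_lt_one) le_rfl
  obtain ⟨V, hV⟩ := isCompact_Icc.exists_bound_of_continuousOn hγ'
  set p : ℝ → ℂ := fun t => γ (pr t) with hpdef
  set v : ℝ → ℂ := fun t => derivWithin γ (Icc 0 1) (pr t) with hvdef
  have hp : Continuous p := hγ.continuousOn.comp_continuous hpr hprm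
  have hv : Continuous v := hγ'.comp_continuous hpr hprm
  have hd : ∀ t ∈ Ioo (0:ℝ) 1, HasDerivAt p (v t) t := by
    intro t ht
    have hn : Icc (0:ℝ) 1 ∈ 𝓝 t := Icc_mem_nhds ht.1 ht.2
    have h1 : HasDerivAt γ (derivWithin γ (Icc 0 1) t) t :=
      ((hγ.differentiableOn one_ne_zero) t (Ioo_subset_Icc_self ht)).hasDerivWithinAt.hasDerivAt hn
    have h2 : v t = derivWithin γ (Icc 0 1) t := by
      simp only [hvdef, hpre t (Ioo_subset_Icc_self ht)]
    rw [h2]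
    refine h1.congr_of_eventuallyEq ?_
    filter_upwards [hn] with s hs
    simp only [hpdef, hpre s hs]
  have hcl : p 0 = p 1 := by
    simp only [hpdef, hpre 0 (by simp), hpre 1 (by simp), hclosed]
  have hran : range p = p '' Icc 0 1 := by
    ext x
    constructor
    · rintro ⟨t, rfl⟩
      exact ⟨pr t, hprm t, by simp only [hpdef, hpre _ (hprm t)]⟩
    · rintro ⟨t, _, rfl⟩
      exact ⟨t, rfl⟩
  have K : IsCompact (range p) := by
    rw [hran]; exact isCompact_Icc.image hp
  have hpU : ∀ t, p t ∈ U := fun t => (him ⟨pr t, hprm t, rfl⟩).1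
  have hpS : ∀ t, p t ∉ segment ℝ a b := fun t => (him ⟨pr t, hprm t, rfl⟩).2
  have hcongr : ∀ F : ℂ → ℂ → ℂ, ∫ t in (0:ℝ)..1, F (γ t) (derivWithin γ (Icc 0 1) t) =
      ∫ t in (0:ℝ)..1, F (p t) (v t) := by
    intro F
    refine intervalIntegral.integral_congr fun t ht => ?_
    rw [uIcc_of_le zero_le_one] at ht
    simp only [hpdef, hvdef, hpre t ht]
  have hw1 : ∀ z ∈ segment ℝ a b, ∫ t in (0:ℝ)..1, v t / (p t - z) = 2 * Real.pi * Complex.I := by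
    intro z hz
    have h := hwind1 z hz
    rw [hcongr (fun x y => y / (x - z)), one_div, inv_mul_eq_one₀ hpi] at h
    exact h.symm
  have hw0 : ∀ z ∉ U, ∫ t in (0:ℝ)..1, v t / (p t - z) = 0 := by
    intro z hz
    have h := hwind0 z hz
    rw [hcongr (fun x y => y / (x - z))] at h
    exact (mul_eq_zero.1 h).resolve_left (one_div_ne_zero hpi)
  rw [hcongr (fun x y => f x / w x * y)]
  have hcau : ∀ z ∈ segment ℝ a b, ∫ t in (0:ℝ)..1, f (p t) * v t / (p t - z) =
      f z * (2 * Real.pi * Complex.I) := by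
    intro z hz
    rw [cauchy_hom U hU f hf p v hp hv hd hcl K V (fun t => hV _ (hprm t)) hpU hw0 z (hab hz)
      (by rintro ⟨t, rfl⟩; exact hpS t hz), hw1 z hz]
  -- the kernel
  set c : ℝ → ℂ := fun θ => (a + b) / 2 + (b - a) / 2 * (Real.cos θ : ℂ) with hc
  have hcc : Continuous c := by rw [hc]; fun_prop
  have hcS : ∀ θ, c θ ∈ segment ℝ a b := fun θ =>
    seg_cos a b _ ⟨Real.neg_one_le_cos θ, Real.cos_le_one θ⟩
  have hpc : ∀ t θ, p t - c θ ≠ 0 := by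
    intro t θ h
    apply hpS t
    rw [sub_eq_zero.1 h]
    exact hcS θ
  set J : ℝ → ℂ := fun t => ∫ θ in (0:ℝ)..(2 * Real.pi), 1 / (p t - c θ) with hJ
  have hJc : Continuous J := by
    refine intervalIntegral.continuous_parametric_intervalIntegral_of_continuous' ?_ _ _
    refine Continuous.div continuous_const ?_ ?_
    · exact (hp.comp continuous_fst).sub (hcc.comp continuous_snd)
    · rintro ⟨t, θ⟩; exact hpc t θ
  have hJ2 : ∀ t, J t ^ 2 * w (p t) ^ 2 = (2 * Real.pi) ^ 2 := by
    intro t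
    rw [hw2 _ (hpS t)]
    exact seg_int a b (p t) (hpS t)
  have hw00 : ∀ t, w (p t) ≠ 0 := by
    intro t h
    have := hJ2 t
    rw [h, zero_pow two_ne_zero, mul_zero] at this
    exact pow_ne_zero 2 hpi' this.symm
  have hwc : Continuous fun t => w (p t) := hw.continuousOn.comp_continuous hp hpS
  have hsgn : ∃ s : ℂ, ‖s‖ = 1 ∧ ∀ t, 1 / w (p t) = s / (2 * Real.pi) * J t := by
    have hsq := (isPreconnected_univ (α := ℝ)).eq_one_or_eq_neg_one_of_sq_eq
      (f := fun t => J t * w (p t) / (2 * Real.pi)) ?_ ?_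
    · rcases hsq with h | h
      · refine ⟨1, by simp, fun t => ?_⟩
        have h1 := h (mem_univ t)
        simp only [Pi.one_apply] at h1
        rw [div_eq_one_iff_eq hpi'] at h1
        have := hw00 t
        rw [← h1]
        have : J t ≠ 0 := by
          intro h; rw [h, zero_mul] at h1; exact hpi' h1.symm
        field_simp
      · refine ⟨-1, by simp, fun t => ?_⟩
        have h1 := h (mem_univ t)
        simp only [Pi.neg_apply, Pi.one_apply] at h1
        rw [div_eq_iff hpi'] at h1
        have := hw00 t
        have h2 : (2 * Real.pi : ℂ) = -(J t * w (p t)) := by rw [h1]; ring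
        rw [h2]
        have : J t ≠ 0 := by
          intro h; rw [h, zero_mul, neg_zero] at h2; exact hpi' h2
        field_simp
    · exact ((hJc.mul hwc).div_const _).continuousOn
    · intro t _
      simp only [Pi.pow_apply, Pi.one_apply]
      rw [div_pow, mul_pow, hJ2 t, div_self (pow_ne_zero 2 hpi')]
  obtain ⟨s, hs1, hs⟩ := hsgn
  have hfp : Continuous fun t => f (p t) := hf.continuousOn.comp_continuous hp hpU
  have hmain : ∫ t in (0:ℝ)..1, f (p t) / w (p t) * v t =
      s / (2 * Real.pi) * ∫ θ in (0:ℝ)..(2 * Real.pi), f (c θ) * (2 * Real.pi * Complex.I) := by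
    have e1 : ∫ t in (0:ℝ)..1, f (p t) / w (p t) * v t = s / (2 * Real.pi) *
        ∫ t in (0:ℝ)..1, ∫ θ in (0:ℝ)..(2 * Real.pi), f (p t) * v t / (p t - c θ) := by
      rw [← intervalIntegral.integral_const_mul]
      refine intervalIntegral.integral_congr fun t _ => ?_
      have e2 : ∫ θ in (0:ℝ)..(2 * Real.pi), f (p t) * v t / (p t - c θ) = f (p t) * v t * J t := by
        rw [hJ, ← intervalIntegral.integral_const_mul]
        refine intervalIntegral.integral_congr fun θ _ => ?_
        ring
      simp only [e2]
      rw [div_eq_mul_one_div, hs t]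
      ring
    rw [e1, intervalIntegral_intervalIntegral_swap]
    · congr 1
      refine intervalIntegral.integral_congr fun θ _ => ?_
      exact hcau _ (hcS θ)
    · have hcont : Continuous (Function.uncurry fun t θ => f (p t) * v t / (p t - c θ)) := by
        refine Continuous.div ?_ ?_ ?_
        · exact (hfp.mul hv).comp continuous_fst
        · exact (hp.comp continuous_fst).sub (hcc.comp continuous_snd)
        · rintro ⟨t, θ⟩; exact hpc t θ
      exact (hcont.continuousOn.integrableOn_compact
        (isCompact_uIcc.prod isCompact_uIcc)).mono_set (prod_mono uIoc_subset_uIcc uIoc_subset_uIcc)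
  have hScomp : IsCompact (segment ℝ a b) := by
    rw [segment_eq_image]
    exact isCompact_Icc.image (by fun_prop)
  have hbdd : BddAbove ((fun z => ‖f z‖) '' segment ℝ a b) :=
    (hScomp.image_of_continuousOn (hf.continuousOn.mono hab).norm).bddAbove
  have hle : ∀ θ, ‖f (c θ)‖ ≤ sSup ((fun z => ‖f z‖) '' segment ℝ a b) := fun θ =>
    le_csSup hbdd ⟨c θ, hcS θ, rfl⟩
  rw [hmain, intervalIntegral.integral_mul_const]
  have hb := intervalIntegral.norm_integral_le_of_norm_le_const (a := 0) (b := 2 * Real.pi)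
    (f := fun θ => f (c θ)) (fun θ _ => hle θ)
  have hpp := Real.pi_pos
  rw [sub_zero, abs_of_pos (by positivity)] at hb
  have e3 : s / (2 * Real.pi : ℂ) * ((∫ θ in (0:ℝ)..(2 * Real.pi), f (c θ)) * (2 * Real.pi * Complex.I))
      = s * Complex.I * ∫ θ in (0:ℝ)..(2 * Real.pi), f (c θ) := by
    field_simp
  rw [e3, norm_mul, norm_mul, hs1, Complex.norm_I, one_mul, one_mul]
  linarith
end

section
/- Let a, b ∈ ℂ and let G ⊆ ℂ be the image of a continuous injective curve from a to b (i.e. G = g([0,1]) for some continuous injective g : [0,1] → ℂ with g(0) = a and g(1) = b). Then there exists a holomorphic function w on ℂ ∖ G (the standard root of (λ − a)(λ − b) on ℂ ∖ G) such that w(λ)² = (λ − a)(λ − b) for all λ ∈ ℂ ∖ G and such that w(λ)/λ → −1 as |λ| → ∞, i.e. w(λ) ∼ −λ at infinity. -/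
open Set Filter

open scoped unitInterval in
/-- Existence of the continuous logarithm of `(z - g 1)/(z - g 0)` off the curve. -/
lemma aux_log (g : ℝ → ℂ) (hg : ContinuousOn g (Icc 0 1)) :
    ∃ F : ℂ → ℂ, ContinuousOn F (g '' Icc 0 1)ᶜ ∧
      (∀ z ∉ g '' Icc 0 1, Complex.exp (F z) = (z - g 1) / (z - g 0)) ∧
      (∀ᶠ z in Bornology.cobounded ℂ, z ∉ g '' Icc 0 1 ∧
        F z = Complex.log ((z - g 1) / (z - g 0))) := by
  classical
  set U : Set ℂ := (g '' Icc 0 1)ᶜ with hU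
  have hgc : Continuous (fun t : I => g t) := continuousOn_iff_continuous_domRestrict.mp hg
  have hne : ∀ (t : I) (z : U), (z : ℂ) - g t ≠ 0 := by
    intro t z h
    exact z.2 ⟨t, t.2, (sub_eq_zero.mp h).symm⟩
  have hne0 : ∀ z : U, (z : ℂ) - g 0 ≠ 0 := fun z => by simpa using hne 0 z
  let H : C(I × U, {z : ℂ // z ≠ 0}) :=
    ⟨fun p => ⟨((p.2 : ℂ) - g p.1) / ((p.2 : ℂ) - g 0), div_ne_zero (hne _ _) (hne0 _)⟩, by
      refine Continuous.subtype_mk (Continuous.div ?_ ?_ (fun p => hne0 _)) _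
      · exact (continuous_subtype_val.comp continuous_snd).sub (hgc.comp continuous_fst)
      · fun_prop⟩
  have H0 : ∀ z : U, H (0, z) =
      (⟨Complex.exp ((ContinuousMap.const U (0:ℂ)) z), Complex.exp_ne_zero _⟩ : {z : ℂ // z ≠ 0}) := by
    intro z
    apply Subtype.ext
    simp [H, div_self (hne0 z)]
  let L := Complex.isCoveringMap_exp.liftHomotopy H (ContinuousMap.const U (0:ℂ)) H0
  have Ll := Complex.isCoveringMap_exp.liftHomotopy_lifts H (ContinuousMap.const U (0:ℂ)) H0
  have L0 : ∀ z, L (0, z) = 0 := 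
    Complex.isCoveringMap_exp.liftHomotopy_zero H (ContinuousMap.const U (0:ℂ)) H0
  have Le : ∀ t z, Complex.exp (L (t, z)) = ((z : ℂ) - g t) / ((z : ℂ) - g 0) := by
    intro t z
    exact congrArg Subtype.val (congrFun Ll (t, z))
  refine ⟨fun z => if h : z ∈ U then L (1, ⟨z, h⟩) else 0, ?_, ?_, ?_⟩
  · rw [continuousOn_iff_continuous_domRestrict]
    have : Continuous fun z : U => L (1, z) := by fun_prop
    convert this using 1
    ext z
    simp
  · intro z hz
    have hz' : z ∈ U := hz
    simp only [hz', dif_pos]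
    simpa using Le 1 ⟨z, hz'⟩
  · obtain ⟨M, hM⟩ := (isCompact_Icc.image_of_continuousOn hg).isBounded.exists_norm_le
    have hM' : ∀ t : I, ‖g t‖ ≤ M := fun t => hM _ ⟨t, t.2, rfl⟩
    have hM0 : ‖g 0‖ ≤ M := hM _ ⟨0, by simp, rfl⟩
    have ev : ∀ᶠ z in Bornology.cobounded ℂ, 3 * M < ‖z‖ :=
      tendsto_norm_cobounded_atTop.eventually_gt_atTop _
    filter_upwards [ev] with z hz
    have hMn : 0 ≤ M := (norm_nonneg _).trans hM0
    have hzU : z ∈ U := by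
      intro h
      have := hM z h
      linarith
    refine ⟨hzU, ?_⟩
    simp only [hzU, dif_pos]
    have sl : ∀ t : I, (z - g t) / (z - g 0) ∈ Complex.slitPlane := by
      intro t
      have e : (z - g t) / (z - g 0) = 1 + (g 0 - g t) / (z - g 0) := by
        have := hne0 ⟨z, hzU⟩
        field_simp
        ring
      rw [e]
      apply Complex.mem_slitPlane_of_norm_lt_one
      have h1 : ‖g 0 - g t‖ ≤ ‖g 0‖ + ‖g t‖ := norm_sub_le _ _
      have h2 : ‖z‖ - ‖g 0‖ ≤ ‖z - g 0‖ := norm_sub_norm_le _ _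
      have h3 := hM' t
      rw [norm_div, div_lt_one (by linarith)]
      linarith
    have key : (fun t : I => L (t, ⟨z, hzU⟩)) = fun t : I => Complex.log ((z - g t) / (z - g 0)) := by
      refine Complex.isCoveringMap_exp.eq_of_comp_eq (by fun_prop) ?_ ?_ 0 ?_
      · refine Continuous.clog ?_ sl
        exact (continuous_const.sub hgc).div_const _
      · ext t
        simp only [Function.comp]
        rw [Le, Complex.exp_log (Complex.slitPlane_ne_zero (sl t))]
      · simp only [L0]
        have := hne0 ⟨z, hzU⟩
        simp [div_self this]
    simpa using congrFun key 1

/-- Let `G ⊆ ℂ` be the image of a continuous injective curve from `a` to `b`. Then there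
exists a holomorphic function `w` on `ℂ ∖ G` (the standard root of `(λ-a)(λ-b)`) with
`w(λ)² = (λ-a)(λ-b)` for all `λ ∉ G` and `w(λ)/λ → -1` as `|λ| → ∞`. -/
theorem stmt_10 (a b : ℂ) (g : ℝ → ℂ) (hg : ContinuousOn g (Icc 0 1))
    (hinj : InjOn g (Icc 0 1)) (ha : g 0 = a) (hb : g 1 = b) :
    ∃ w : ℂ → ℂ,
      DifferentiableOn ℂ w (g '' Icc 0 1)ᶜ ∧
      (∀ z ∉ g '' Icc 0 1, (w z) ^ 2 = (z - a) * (z - b)) ∧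
      Tendsto (fun z => w z / z) (comap (fun z : ℂ => ‖z‖) atTop) (nhds (-1)) := by
  obtain ⟨F, hFc, hFe, hFi⟩ := aux_log g hg
  rw [ha, hb] at hFi
  simp only [ha, hb] at hFe
  have hUo : IsOpen (g '' Icc 0 1)ᶜ :=
    (isCompact_Icc.image_of_continuousOn hg).isClosed.isOpen_compl
  have hza : ∀ z ∉ g '' Icc 0 1, z - a ≠ 0 := by
    intro z hz h
    exact hz ⟨0, by simp, by rw [ha, sub_eq_zero.mp h]⟩
  have hFd : DifferentiableOn ℂ F (g '' Icc 0 1)ᶜ := by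
    intro z₀ hz₀
    apply DifferentiableAt.differentiableWithinAt
    have hc : ContinuousAt F z₀ := hFc.continuousAt (hUo.mem_nhds hz₀)
    have hev : ∀ᶠ z in nhds z₀, F z =
        F z₀ + Complex.log ((z - b) / (z - a) / Complex.exp (F z₀)) := by
      have h1 : ∀ᶠ z in nhds z₀, dist (F z) (F z₀) < 1 :=
        (Metric.tendsto_nhds.mp hc) 1 one_pos
      filter_upwards [h1, hUo.mem_nhds hz₀] with z h1 h2
      rw [← hFe z h2, ← Complex.exp_sub, Complex.log_exp]
      · ring
      · have := Complex.abs_im_le_norm (F z - F z₀)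
        rw [dist_eq_norm] at h1
        linarith [neg_abs_le (F z - F z₀).im, Real.pi_gt_three]
      · have := Complex.abs_im_le_norm (F z - F z₀)
        rw [dist_eq_norm] at h1
        linarith [le_abs_self (F z - F z₀).im, Real.pi_gt_three]
    refine DifferentiableAt.congr_of_eventuallyEq ?_ hev
    refine (differentiableAt_const _).add (DifferentiableAt.clog ?_ ?_)
    · have hz1 := hza z₀ hz₀
      have hd : DifferentiableAt ℂ (fun z => (z - b) / (z - a)) z₀ := by
        fun_prop (disch := assumption)
      exact hd.div_const _
    · rw [← hFe z₀ hz₀, div_self (Complex.exp_ne_zero _)]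
      exact Complex.one_mem_slitPlane
  refine ⟨fun z => -(z - a) * Complex.exp (F z / 2), ?_, ?_, ?_⟩
  · exact DifferentiableOn.mul (by fun_prop) ((hFd.div_const 2).cexp)
  · intro z hz
    have h := hza z hz
    rw [mul_pow, ← Complex.exp_nat_mul]
    have : ((2 : ℕ) : ℂ) * (F z / 2) = F z := by push_cast; ring
    rw [this, hFe z hz]
    field_simp
  · rw [comap_norm_atTop]
    have hi : Tendsto (fun z : ℂ => z⁻¹) (Bornology.cobounded ℂ) (nhds 0) :=
      tendsto_inv₀_cobounded
    have h0 : ∀ᶠ z in Bornology.cobounded ℂ, 0 < ‖z‖ :=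
      tendsto_norm_cobounded_atTop.eventually_gt_atTop _
    have ca : ∀ c : ℂ, Tendsto (fun z : ℂ => 1 - c * z⁻¹) (Bornology.cobounded ℂ) (nhds 1) := by
      intro c
      simpa using (hi.const_mul c).const_sub 1
    have hq : Tendsto (fun z : ℂ => (1 - b * z⁻¹) / (1 - a * z⁻¹)) (Bornology.cobounded ℂ)
        (nhds 1) := by
      have := (ca b).div (ca a) one_ne_zero
      rw [div_one] at this
      exact this
    have hl := (hq.clog Complex.one_mem_slitPlane).div_const 2
    have hm := (ca a).neg.mul hl.cexp
    simp only [Complex.log_one, zero_div, Complex.exp_zero, mul_one] at hm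
    refine hm.congr' ?_
    filter_upwards [hFi, h0] with z hz h0
    have hz0 : z ≠ 0 := norm_pos_iff.mp h0
    have e : ∀ c : ℂ, 1 - c * z⁻¹ = (z - c) / z := by intro c; field_simp
    rw [hz.2, e, e, div_div_div_cancel_right₀ hz0]
    ring
end
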